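/- Let n ≥ 1, σ > 0 and β > 0. There exists C > 0 such that for all x, y ∈ ℝⁿ with x ≠ y, (∫_0^∞ |H_{β,σ}(x,y,t)|² dt/t)^{1/2} ≤ C ∫_0^∞ u^{-1} |W_u^O(x,y) - W_u^{-Δ}(x-y)| e^{-βu} du. -/

import Mathlib

/-!
The function `t e^{-t²/(4u)}` is the dilate `√u F(t/√u)` of `F(t) = t e^{-t²/4}`, and every derivative
of `F` is `O(e^{-t})` on `(0,∞)`. Hence `|t^σ ∂_t^σ[t e^{-t²/(4u)}]| ≤ A √u (t/√u)^σ e^{-t/√u}`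
(`fracDeriv_bound`), and consequently `|H_{β,σ}(x,y,t)|` is at most a constant times
`∫ (t/√u)^σ e^{-t/√u} G(u) du`, where `G(u) = u⁻¹ |W_u^O(x,y) - W_u^{-Δ}(x-y)| e^{-βu}`
(`Hkernel_enorm_le`; here `√u u^{-3/2} = u⁻¹`).

The `L²(dt/t)` norm of `(t/√u)^σ e^{-t/√u}` does not depend on `u` (`profile_sq_lintegral`), so
Minkowski's integral inequality (`lintegral_sq_lintegral_le`) bounds the `L²(dt/t)` norm of `H` by a
constant times `∫ G`, as a lower integral. For `x ≠ y` the function `G` is integrable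
(`rhs_integrable`), so this lower integral is finite and agrees with the Bochner integral of the
statement.
-/

open Real MeasureTheory

/-- `m σ = ⌊σ⌋ + 1`, the smallest integer strictly greater than `σ > 0`. -/
noncomputable def mIdx (σ : ℝ) : ℕ := ⌊σ⌋₊ + 1

/-- The σ-th fractional derivative in `t` of a function `F : (0,∞) → ℂ`. -/
noncomputable def fracDeriv (σ : ℝ) (F : ℝ → ℂ) (t : ℝ) : ℂ :=
  Complex.exp (-(Complex.I * (Real.pi : ℂ) * (((mIdx σ : ℝ) - σ : ℝ) : ℂ))) /
      Complex.Gamma (((mIdx σ : ℝ) - σ : ℝ) : ℂ) *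
    ∫ s in Set.Ioi (0 : ℝ), iteratedDeriv (mIdx σ) F (t + s) * ((s ^ ((mIdx σ : ℝ) - σ - 1) : ℝ) : ℂ)

/-- The Ornstein–Uhlenbeck (Mehler) kernel on `ℝⁿ`:
`W_u^O(x,y) = π^{-n/2}(1-e^{-4u})^{-n/2} exp(-|e^{-2u}x-y|²/(1-e^{-4u}))`. -/
noncomputable def ouKernel (n : ℕ) (u : ℝ)
    (x y : EuclideanSpace ℝ (Fin n)) : ℝ :=
  Real.pi ^ (-(n : ℝ) / 2) * (1 - Real.exp (-4 * u)) ^ (-(n : ℝ) / 2) *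
    Real.exp (-‖Real.exp (-2 * u) • x - y‖ ^ 2 / (1 - Real.exp (-4 * u)))

/-- The Euclidean heat kernel `W_u^{-Δ}(z) = (4πu)^{-n/2} e^{-|z|²/(4u)}` on `ℝⁿ`. -/
noncomputable def euclidHeat (n : ℕ) (u : ℝ) (z : EuclideanSpace ℝ (Fin n)) : ℝ :=
  (4 * Real.pi * u) ^ (-(n : ℝ) / 2) * Real.exp (-‖z‖ ^ 2 / (4 * u))

/-- The kernel `H_{β,σ}(x,y,t) = (t^σ/√(4π)) ∫_0^∞ ∂_t^σ[te^{-t²/(4u)}] u^{-3/2}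
e^{-βu} (W_u^O(x,y) - W_u^{-Δ}(x-y)) du`. -/
noncomputable def Hkernel (n : ℕ) (β σ : ℝ)
    (x y : EuclideanSpace ℝ (Fin n)) (t : ℝ) : ℂ :=
  ((t ^ σ / Real.sqrt (4 * Real.pi) : ℝ) : ℂ) *
    ∫ u in Set.Ioi (0 : ℝ),
      fracDeriv σ (fun t => (t : ℂ) * Complex.exp (-((t : ℂ) ^ 2 / (4 * (u : ℂ))))) t *
        ((u ^ (-(3 : ℝ) / 2) : ℝ) : ℂ) *
        ((Real.exp (-(β * u)) * (ouKernel n u x y - euclidHeat n u (x - y)) : ℝ) : ℂ)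

/-! ### Derivatives of `t e^{-t²/(4u)}` -/

lemma gauss_step (P : Polynomial ℂ) (t : ℝ) :
    HasDerivAt (fun t : ℝ => P.eval (t : ℂ) * Complex.exp (-((t : ℂ) ^ 2 / 4)))
      ((P.derivative - Polynomial.C (1 / 2) * Polynomial.X * P).eval (t : ℂ) *
        Complex.exp (-((t : ℂ) ^ 2 / 4))) t := by
  have h1 : HasDerivAt (fun z : ℂ => P.eval z * Complex.exp (-(z ^ 2 / 4)))
      ((P.derivative - Polynomial.C (1 / 2) * Polynomial.X * P).eval (t : ℂ) *
        Complex.exp (-((t : ℂ) ^ 2 / 4))) (t : ℂ) := by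
    have := (P.hasDerivAt (t : ℂ)).mul ((((hasDerivAt_id (t : ℂ)).pow 2).div_const 4).neg.cexp)
    refine this.congr_deriv ?_
    simp
    ring
  exact h1.comp_ofReal

/-- All derivatives of `t e^{-t²/4}` have the form polynomial times `e^{-t²/4}`. -/
lemma gauss_iter (m : ℕ) : ∃ P : Polynomial ℂ,
    iteratedDeriv m (fun t : ℝ => (t : ℂ) * Complex.exp (-((t : ℂ) ^ 2 / 4))) =
      fun t : ℝ => P.eval (t : ℂ) * Complex.exp (-((t : ℂ) ^ 2 / 4)) := by
  induction m with
  | zero => exact ⟨Polynomial.X, by simp⟩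
  | succ k ih =>
    obtain ⟨P, hP⟩ := ih
    refine ⟨P.derivative - Polynomial.C (1 / 2) * Polynomial.X * P, ?_⟩
    rw [iteratedDeriv_succ, hP]
    funext t
    exact (gauss_step P t).deriv

lemma poly_bound (P : Polynomial ℂ) : ∃ A > 0, ∀ t : ℝ, 0 ≤ t →
    ‖P.eval (t : ℂ)‖ ≤ A * Real.exp t := by
  refine ⟨∑ i ∈ Finset.range (P.natDegree + 1), ‖P.coeff i‖ * (i.factorial : ℝ) + 1,
    by positivity, fun t ht => ?_⟩
  rw [Polynomial.eval_eq_sum_range, add_mul, Finset.sum_mul]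
  refine (norm_sum_le _ _).trans ((Finset.sum_le_sum fun i _ => ?_).trans
    (le_add_of_nonneg_right (by positivity)))
  rw [norm_mul, norm_pow, Complex.norm_real, Real.norm_of_nonneg ht, mul_assoc]
  have := Real.pow_div_factorial_le_exp t ht i
  rw [div_le_iff₀ (by positivity)] at this
  gcongr
  linarith

/-- The bound `|∂_t^m [t e^{-t²/(4u)}]| ≤ A u^{(1-m)/2} e^{-t/√u}`, uniform in `u`: the function is
`√u F(t/√u)` with `F(t) = t e^{-t²/4}`, so only the case `u = 1` requires an estimate. Exponential
(rather than Gaussian) decay is kept because it factors at `t + s`. -/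
lemma iter_bound (m : ℕ) : ∃ A > 0, ∀ u > 0, ∀ t > 0,
    ‖iteratedDeriv m (fun t : ℝ => (t : ℂ) * Complex.exp (-((t : ℂ) ^ 2 / (4 * ((u : ℝ) : ℂ))))) t‖
      ≤ A * (√u * (√u)⁻¹ ^ m) * Real.exp (-((√u)⁻¹ * t)) := by
  obtain ⟨P, hP⟩ := gauss_iter m
  obtain ⟨A, hA, hb⟩ := poly_bound P
  refine ⟨A * Real.exp 4, by positivity, fun u hu t ht => ?_⟩
  have hsc : (fun t : ℝ => (t : ℂ) * Complex.exp (-((t : ℂ) ^ 2 / (4 * ((u : ℝ) : ℂ))))) =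
      fun t : ℝ => ((√u : ℝ) : ℂ) * (fun t : ℝ => (t : ℂ) * Complex.exp (-((t : ℂ) ^ 2 / 4)))
        ((√u)⁻¹ * t) := by
    have hs : ((√u : ℝ) : ℂ) ≠ 0 := by
      exact_mod_cast (Real.sqrt_pos.2 hu).ne'
    have hs2 : (u : ℂ) = ((√u : ℝ) : ℂ) ^ 2 := by
      exact_mod_cast (Real.sq_sqrt hu.le).symm
    funext t
    rw [hs2]
    push_cast
    rw [← mul_assoc, ← mul_assoc, mul_inv_cancel₀ hs, one_mul]
    congr 2
    field_simp
  have hcd : ContDiff ℝ m (fun t : ℝ => (t : ℂ) * Complex.exp (-((t : ℂ) ^ 2 / 4))) := by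
    have : ContDiff ℝ m (fun t : ℝ => (t : ℂ)) := Complex.ofRealCLM.contDiff
    fun_prop
  rw [hsc, iteratedDeriv_const_mul_field, iteratedDeriv_comp_const_smul hcd, hP]
  set r := (√u)⁻¹
  have hr : 0 < r := inv_pos.2 (Real.sqrt_pos.2 hu)
  have h1 := hb (r * t) (by positivity)
  have h2 : ‖Complex.exp (-(((r * t : ℝ) : ℂ) ^ 2 / 4))‖ ≤
      Real.exp 4 * Real.exp (-(r * t)) * Real.exp (-(r * t)) := by
    rw [Complex.norm_exp, ← Real.exp_add, ← Real.exp_add]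
    apply Real.exp_le_exp.2
    have : (-(((r * t : ℝ) : ℂ) ^ 2 / 4)).re = -((r * t) ^ 2 / 4) := by
      rw [show (-(((r * t : ℝ) : ℂ) ^ 2 / 4)) = ((-((r * t) ^ 2 / 4) : ℝ) : ℂ) by push_cast; rfl]
      exact Complex.ofReal_re _
    rw [this]
    -- `-s²/4 ≤ 4 - 2s`; one factor `e^{-s}` absorbs the polynomial.
    nlinarith [sq_nonneg (r * t - 4)]
  simp only [norm_mul, norm_pow, Complex.norm_real, norm_smul, Real.norm_of_nonneg hr.le, Real.norm_of_nonneg (Real.sqrt_nonneg u)]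
  calc √u * (r ^ m * (‖P.eval ((r * t : ℝ) : ℂ)‖ * ‖Complex.exp (-(((r * t : ℝ) : ℂ) ^ 2 / 4))‖))
      ≤ √u * (r ^ m * ((A * Real.exp (r * t)) *
        (Real.exp 4 * Real.exp (-(r * t)) * Real.exp (-(r * t))))) := by gcongr
    _ = _ := by
      have : Real.exp (r * t) * Real.exp (-(r * t)) = 1 := by rw [← Real.exp_add]; simp
      linear_combination (√u * r ^ m * A * Real.exp 4 * Real.exp (-(r * t))) * this

/-- The bound `|∂_t^σ [t e^{-t²/(4u)}]| ≤ A u^{(1-σ)/2} e^{-t/√u}`, obtained by inserting `iter_bound`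
into the integral defining `∂_t^σ`, which then becomes a Gamma integral. -/
lemma fracDeriv_bound (σ : ℝ) : ∃ A > 0, ∀ u > 0, ∀ t > 0,
    ‖fracDeriv σ (fun t : ℝ => (t : ℂ) * Complex.exp (-((t : ℂ) ^ 2 / (4 * ((u : ℝ) : ℂ))))) t‖
      ≤ A * (√u * (√u)⁻¹ ^ σ) * Real.exp (-((√u)⁻¹ * t)) := by
  obtain ⟨A, hA, hb⟩ := iter_bound (mIdx σ)
  have ha : 0 < (mIdx σ : ℝ) - σ := by
    have := Nat.lt_floor_add_one σ
    simp only [mIdx]; push_cast; linarith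
  set a := (mIdx σ : ℝ) - σ with hadef
  have hG := Real.Gamma_pos_of_pos ha
  set c := Complex.exp (-(Complex.I * (Real.pi : ℂ) * ((a : ℝ) : ℂ))) /
      Complex.Gamma ((a : ℝ) : ℂ) with hc
  refine ⟨(‖c‖ + 1) * A * Real.Gamma a, by positivity, fun u hu t ht => ?_⟩
  have hr : 0 < (√u)⁻¹ := inv_pos.2 (Real.sqrt_pos.2 hu)
  have hbu := hb u hu
  set r := (√u)⁻¹ with hrdef
  have hI := Real.integral_rpow_mul_exp_neg_mul_Ioi ha hr
  have hint : Integrable (fun s : ℝ => s ^ (a - 1) * Real.exp (-(r * s)))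
      (volume.restrict (Set.Ioi 0)) := by
    -- A non-integrable function would have integral `0`, whereas the Gamma integral is positive.
    by_contra h
    rw [integral_undef h] at hI
    have : 0 < (1 / r) ^ a * Real.Gamma a := by positivity
    linarith
  have key := norm_integral_le_of_norm_le
    (μ := volume.restrict (Set.Ioi (0 : ℝ)))
    (f := fun s => iteratedDeriv (mIdx σ) (fun t : ℝ => (t : ℂ) * Complex.exp (-((t : ℂ) ^ 2 / (4 * ((u : ℝ) : ℂ))))) (t + s) * ((s ^ (a - 1) : ℝ) : ℂ))
    (hint.const_mul (A * (√u * r ^ mIdx σ) * Real.exp (-(r * t)))) (by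
      filter_upwards [ae_restrict_mem measurableSet_Ioi] with s hs
      have hs : 0 < s := hs
      rw [norm_mul, Complex.norm_real, Real.norm_of_nonneg (by positivity)]
      calc _ ≤ (A * (√u * r ^ mIdx σ) * Real.exp (-(r * (t + s)))) * s ^ (a - 1) := by
            gcongr
            exact hbu (t + s) (by positivity)
        _ = _ := by
          rw [show -(r * (t + s)) = -(r * t) + -(r * s) by ring, Real.exp_add]; ring)
  rw [integral_const_mul, hI] at key
  rw [fracDeriv, ← hadef, ← hc, norm_mul]
  have hpow : r ^ mIdx σ * (1 / r) ^ a = r ^ σ := by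
    rw [one_div, Real.inv_rpow hr.le, ← Real.rpow_neg hr.le, ← Real.rpow_natCast,
      ← Real.rpow_add hr, hadef]
    congr 1; ring
  calc _ ≤ (‖c‖ + 1) * (A * (√u * r ^ mIdx σ) * Real.exp (-(r * t)) *
        ((1 / r) ^ a * Real.Gamma a)) := by
        gcongr
        linarith
    _ = _ := by rw [← hpow]; ring

/-! ### Minkowski's inequality and the profile `(rt)^σ e^{-rt}` -/

open scoped ENNReal in
/-- Minkowski's integral inequality in `L²(h dν)` for a kernel whose sections `k(·, u)` are uniformly
bounded in that space. It follows from the Cauchy–Schwarz inequality for the measure `g dμ` and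
Tonelli's theorem. -/
lemma lintegral_sq_lintegral_le {μ ν : Measure ℝ} [SFinite μ] [SFinite ν]
    (k : ℝ → ℝ → ℝ≥0∞) (hk : Measurable (Function.uncurry k))
    (g h : ℝ → ℝ≥0∞) (hg : Measurable g) (hh : Measurable h) (K : ℝ≥0∞)
    (hK : ∀ᵐ u ∂μ, ∫⁻ t, k t u ^ 2 * h t ∂ν ≤ K) :
    ∫⁻ t, (∫⁻ u, k t u * g u ∂μ) ^ 2 * h t ∂ν ≤ K * (∫⁻ u, g u ∂μ) ^ 2 := by
  have hkt : ∀ t, Measurable (k t) := fun t => hk.comp measurable_prodMk_left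
  have hku : ∀ u, Measurable (fun t => k t u) := fun u => hk.comp measurable_prodMk_right
  have cs : ∀ t, (∫⁻ u, k t u * g u ∂μ) ^ 2 ≤
      (∫⁻ u, k t u ^ 2 * g u ∂μ) * ∫⁻ u, g u ∂μ := by
    intro t
    have hsq : ∀ a : ℝ≥0∞, a ^ (1 / 2 : ℝ) * a ^ (1 / 2 : ℝ) = a := fun a => by
      rw [← ENNReal.rpow_add_of_nonneg _ _ (by norm_num) (by norm_num)]; norm_num
    have := ENNReal.lintegral_mul_le_Lp_mul_Lq μ (p := 2) (q := 2) Real.HolderConjugate.two_two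
      (f := fun u => k t u * g u ^ (1 / 2 : ℝ)) (g := fun u => g u ^ (1 / 2 : ℝ))
      ((hkt t).mul (hg.pow_const _)).aemeasurable (hg.pow_const _).aemeasurable
    simp only [Pi.mul_apply, mul_assoc, hsq, ENNReal.rpow_two, mul_pow] at this
    simp only [pow_two (_ ^ (1 / 2 : ℝ)), hsq] at this
    calc _ ≤ _ := pow_le_pow_left' this 2
      _ = _ := by rw [mul_pow, pow_two (_ ^ (1 / 2 : ℝ)), pow_two (_ ^ (1 / 2 : ℝ)), hsq, hsq]
  calc ∫⁻ t, (∫⁻ u, k t u * g u ∂μ) ^ 2 * h t ∂ν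
      ≤ ∫⁻ t, (∫⁻ u, g u ∂μ) * ∫⁻ u, k t u ^ 2 * h t * g u ∂μ ∂ν := by
        refine lintegral_mono fun t => ?_
        calc _ ≤ (∫⁻ u, k t u ^ 2 * g u ∂μ) * (∫⁻ u, g u ∂μ) * h t := by
              gcongr; exact cs t
          _ = (∫⁻ u, g u ∂μ) * (h t * ∫⁻ u, k t u ^ 2 * g u ∂μ) := by ring
          _ = _ := by
            rw [← lintegral_const_mul _ (f := fun u => k t u ^ 2 * g u)
              (((hkt t).pow_const 2).mul hg)]
            congr 2; funext u; ring
    _ = (∫⁻ u, g u ∂μ) * ∫⁻ u, (∫⁻ t, k t u ^ 2 * h t ∂ν) * g u ∂μ := by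
        have hm : Measurable (Function.uncurry fun t u => k t u ^ 2 * h t * g u) :=
          ((hk.pow_const 2).mul (hh.comp measurable_fst)).mul (hg.comp measurable_snd)
        rw [lintegral_const_mul _ hm.lintegral_prod_right, lintegral_lintegral_swap hm.aemeasurable]
        congr 2; funext u
        rw [lintegral_mul_const _ (f := fun t => k t u ^ 2 * h t)
          (((hku u).pow_const 2).mul hh)]
    _ ≤ (∫⁻ u, g u ∂μ) * ∫⁻ u, K * g u ∂μ := by
        gcongr 1
        refine lintegral_mono_ae ?_
        filter_upwards [hK] with u hu
        gcongr
    _ = _ := by rw [lintegral_const_mul _ hg]; ring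

/-- The `L²(dt/t)` norm of `(rt)^σ e^{-rt}` does not depend on `r`. -/
lemma profile_sq_lintegral (σ : ℝ) (hσ : 0 < σ) (r : ℝ) (hr : 0 < r) :
    ∫⁻ t in Set.Ioi (0 : ℝ), ENNReal.ofReal (t ^ σ * r ^ σ * Real.exp (-(r * t))) ^ 2 *
      ENNReal.ofReal t⁻¹ = ENNReal.ofReal ((1 / 2) ^ (2 * σ) * Real.Gamma (2 * σ)) := by
  have hI := Real.integral_rpow_mul_exp_neg_mul_Ioi (a := 2 * σ) (r := 2 * r)
    (by positivity) (by positivity)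
  have hG := Real.Gamma_pos_of_pos (show 0 < 2 * σ by positivity)
  have hint : Integrable (fun s : ℝ => s ^ (2 * σ - 1) * Real.exp (-(2 * r * s)))
      (volume.restrict (Set.Ioi 0)) := by
    by_contra h
    rw [integral_undef h] at hI
    have : 0 < (1 / (2 * r)) ^ (2 * σ) * Real.Gamma (2 * σ) := by positivity
    linarith
  have hval : (1 / 2) ^ (2 * σ) * Real.Gamma (2 * σ) =
      ∫ s in Set.Ioi (0 : ℝ), r ^ (2 * σ) * (s ^ (2 * σ - 1) * Real.exp (-(2 * r * s))) := by
    rw [integral_const_mul, hI, ← mul_assoc, ← Real.mul_rpow (by positivity) (by positivity)]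
    congr 2; field_simp
  rw [hval, ofReal_integral_eq_lintegral_ofReal (hint.const_mul _)]
  · refine setLIntegral_congr_fun measurableSet_Ioi fun t ht => ?_
    have ht : 0 < t := ht
    rw [← ENNReal.ofReal_pow (by positivity), ← ENNReal.ofReal_mul (by positivity)]
    congr 1
    have e1 : t ^ (2 * σ - 1) = (t ^ σ) ^ 2 * t⁻¹ := by
      rw [Real.rpow_sub ht, Real.rpow_one, mul_comm 2 σ, Real.rpow_mul ht.le, Real.rpow_two,
        div_eq_mul_inv]
    have e2 : r ^ (2 * σ) = (r ^ σ) ^ 2 := by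
      rw [mul_comm 2 σ, Real.rpow_mul hr.le, Real.rpow_two]
    have e3 : Real.exp (-(2 * r * t)) = Real.exp (-(r * t)) ^ 2 := by
      rw [← Real.exp_nat_mul]; congr 1; push_cast; ring
    rw [e1, e2, e3]; ring
  · filter_upwards [ae_restrict_mem measurableSet_Ioi] with s hs
    have hs : 0 < s := hs
    simp only [Pi.zero_apply]
    positivity

/-! ### Integrability of the right-hand integrand -/

open Filter Topology in
lemma rpow_mul_exp_tendsto (p ρ : ℝ) (hρ : 0 < ρ) :
    Tendsto (fun w : ℝ => w ^ (-p) * Real.exp (-ρ / w)) (𝓝[>] 0) (𝓝 0) := by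
  refine ((tendsto_rpow_mul_exp_neg_mul_atTop_nhds_zero p ρ hρ).comp
    tendsto_inv_nhdsGT_zero).congr' ?_
  filter_upwards [self_mem_nhdsWithin] with w hw
  have hw : 0 < w := hw
  simp only [Function.comp]
  rw [Real.inv_rpow hw.le, Real.rpow_neg hw.le, div_eq_mul_inv]

lemma one_sub_exp_pos {u : ℝ} (hu : 0 < u) : 0 < 1 - Real.exp (-4 * u) := by
  have : Real.exp (-4 * u) < 1 := Real.exp_lt_one_iff.2 (by linarith)
  linarith

lemma measurable_kernel_diff (n : ℕ) (x y : EuclideanSpace ℝ (Fin n)) :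
    Measurable (fun u : ℝ => ouKernel n u x y - euclidHeat n u (x - y)) := by
  unfold ouKernel euclidHeat
  have h : Measurable (fun u : ℝ => ‖Real.exp (-2 * u) • x - y‖) := by
    have : Continuous (fun u : ℝ => ‖Real.exp (-2 * u) • x - y‖) := by fun_prop
    exact this.measurable
  fun_prop

open Filter Topology in
lemma euclidHeat_small (n : ℕ) (z : EuclideanSpace ℝ (Fin n)) (hz : z ≠ 0) :
    ∀ᶠ u in 𝓝[>] (0 : ℝ), u⁻¹ * euclidHeat n u z ≤ 1 := by
  have hz' := norm_pos_iff.2 hz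
  have h := (rpow_mul_exp_tendsto ((n : ℝ) / 2 + 1) (‖z‖ ^ 2 / 4) (by positivity)).const_mul
    ((4 * Real.pi) ^ (-(n : ℝ) / 2))
  rw [mul_zero] at h
  filter_upwards [h.eventually_le_const one_pos, self_mem_nhdsWithin] with u hu h0
  have h0 : 0 < u := h0
  refine le_trans (le_of_eq ?_) hu
  unfold euclidHeat
  rw [Real.mul_rpow (by positivity) h0.le,
    show -((n : ℝ) / 2 + 1) = -(n : ℝ) / 2 + -1 by ring, Real.rpow_add h0, Real.rpow_neg_one,
    show -‖z‖ ^ 2 / (4 * u) = -(‖z‖ ^ 2 / 4) / u by field_simp]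
  ring

open Filter Topology in
lemma ouKernel_small (n : ℕ) (x y : EuclideanSpace ℝ (Fin n)) (hxy : x ≠ y) :
    ∀ᶠ u in 𝓝[>] (0 : ℝ), u⁻¹ * ouKernel n u x y ≤ 1 := by
  have hz' := norm_pos_iff.2 (sub_ne_zero.2 hxy)
  have hv : Tendsto (fun u : ℝ => 1 - Real.exp (-4 * u)) (𝓝[>] 0) (𝓝[>] 0) := by
    refine tendsto_nhdsWithin_iff.2 ⟨?_, ?_⟩
    · have : Continuous (fun u : ℝ => 1 - Real.exp (-4 * u)) := by fun_prop
      have := this.tendsto 0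
      simp only [mul_zero, Real.exp_zero, sub_self] at this
      exact this.mono_left nhdsWithin_le_nhds
    · filter_upwards [self_mem_nhdsWithin] with u hu using one_sub_exp_pos hu
  have hn : ∀ᶠ u in 𝓝[>] (0 : ℝ), ‖x - y‖ / 2 ≤ ‖Real.exp (-2 * u) • x - y‖ := by
    have : Continuous (fun u : ℝ => ‖Real.exp (-2 * u) • x - y‖) := by fun_prop
    have := this.tendsto 0
    simp only [mul_zero, Real.exp_zero, one_smul] at this
    exact (this.eventually_const_le (by linarith)).filter_mono nhdsWithin_le_nhds
  have h := ((rpow_mul_exp_tendsto ((n : ℝ) / 2 + 1) (‖x - y‖ ^ 2 / 4) (by positivity)).comp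
    hv).const_mul (4 * Real.pi ^ (-(n : ℝ) / 2))
  rw [mul_zero] at h
  filter_upwards [h.eventually_le_const one_pos, self_mem_nhdsWithin, hn] with u hu h0 hn
  have h0 : 0 < u := h0
  refine le_trans ?_ hu
  have hvp := one_sub_exp_pos h0
  have hv4 : 1 - Real.exp (-4 * u) ≤ 4 * u := by linarith [Real.add_one_le_exp (-4 * u)]
  simp only [Function.comp]
  unfold ouKernel
  set v := 1 - Real.exp (-4 * u)
  have hinv : u⁻¹ ≤ 4 * v⁻¹ := by
    rw [← div_eq_mul_inv, inv_eq_one_div, div_le_div_iff₀ h0 hvp]; linarith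
  rw [show -((n : ℝ) / 2 + 1) = -(n : ℝ) / 2 + -1 by ring, Real.rpow_add hvp, Real.rpow_neg_one]
  calc _ ≤ (4 * v⁻¹) * (Real.pi ^ (-(n : ℝ) / 2) * v ^ (-(n : ℝ) / 2) *
        Real.exp (-(‖x - y‖ ^ 2 / 4) / v)) := by
        gcongr
        calc ‖x - y‖ ^ 2 / 4 = (‖x - y‖ / 2) ^ 2 := by ring
          _ ≤ _ := by gcongr
    _ = _ := by ring

open Filter Topology in
/-- The right-hand integrand is integrable off the diagonal. Since `x ≠ y`, the Gaussian factors of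
both kernels beat every power of `u` as `u → 0⁺`, so that `u⁻¹ |W_u^O - W_u^{-Δ}|` is bounded on
`(0,∞)`, and `e^{-βu}` gives integrability at infinity. -/
lemma rhs_integrable (n : ℕ) (β : ℝ) (hβ : 0 < β) (x y : EuclideanSpace ℝ (Fin n))
    (hxy : x ≠ y) :
    IntegrableOn (fun u : ℝ => u⁻¹ * |ouKernel n u x y - euclidHeat n u (x - y)| *
      Real.exp (-(β * u))) (Set.Ioi 0) := by
  have hE0 : ∀ u > 0, 0 ≤ euclidHeat n u (x - y) := fun u hu => by unfold euclidHeat; positivity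
  have hO0 : ∀ u > 0, 0 ≤ ouKernel n u x y := fun u hu => by
    have := one_sub_exp_pos hu
    unfold ouKernel; positivity
  obtain ⟨δ, hδ, hsmall⟩ := mem_nhdsGT_iff_exists_Ioo_subset.1
    ((euclidHeat_small n (x - y) (sub_ne_zero.2 hxy)).and (ouKernel_small n x y hxy))
  have hδ : 0 < δ := hδ
  set a := δ / 2 with ha
  have ha0 : 0 < a := by positivity
  have hva := one_sub_exp_pos ha0
  set M := max 2 (a⁻¹ * (Real.pi ^ (-(n : ℝ) / 2) * (1 - Real.exp (-4 * a)) ^ (-(n : ℝ) / 2) +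
    (4 * Real.pi * a) ^ (-(n : ℝ) / 2))) with hM
  have hbound : ∀ u > 0, u⁻¹ * |ouKernel n u x y - euclidHeat n u (x - y)| ≤ M := by
    intro u hu
    have habs : |ouKernel n u x y - euclidHeat n u (x - y)| ≤
        ouKernel n u x y + euclidHeat n u (x - y) := by
      rw [abs_le]; constructor <;> linarith [hE0 u hu, hO0 u hu]
    rcases lt_or_ge u a with h | h
    · obtain ⟨h1, h2⟩ := hsmall ⟨hu, by linarith⟩
      refine le_trans ?_ (le_max_left _ _)
      calc _ ≤ u⁻¹ * (ouKernel n u x y + euclidHeat n u (x - y)) := by gcongr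
        _ ≤ 2 := by linarith
    · refine le_trans ?_ (le_max_right _ _)
      have hp : -(n : ℝ) / 2 ≤ 0 := by
        have : (0 : ℝ) ≤ n := n.cast_nonneg
        linarith
      have hvu := one_sub_exp_pos hu
      have h1 : ouKernel n u x y ≤
          Real.pi ^ (-(n : ℝ) / 2) * (1 - Real.exp (-4 * a)) ^ (-(n : ℝ) / 2) := by
        unfold ouKernel
        refine (mul_le_of_le_one_right (by positivity) ?_).trans ?_
        · apply Real.exp_le_one_iff.2
          rw [neg_div]; exact neg_nonpos.2 (by positivity)
        · refine mul_le_mul_of_nonneg_left (Real.rpow_le_rpow_of_nonpos hva ?_ hp) (by positivity)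
          have : Real.exp (-4 * u) ≤ Real.exp (-4 * a) := Real.exp_le_exp.2 (by linarith)
          linarith
      have h2 : euclidHeat n u (x - y) ≤ (4 * Real.pi * a) ^ (-(n : ℝ) / 2) := by
        unfold euclidHeat
        refine (mul_le_of_le_one_right (by positivity) ?_).trans ?_
        · apply Real.exp_le_one_iff.2
          rw [neg_div]; exact neg_nonpos.2 (by positivity)
        · exact Real.rpow_le_rpow_of_nonpos (by positivity) (by gcongr) hp
      have h3 : u⁻¹ ≤ a⁻¹ := by gcongr
      calc _ ≤ u⁻¹ * (ouKernel n u x y + euclidHeat n u (x - y)) := by gcongr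
        _ ≤ _ := mul_le_mul h3 (add_le_add h1 h2) (by linarith [hE0 u hu, hO0 u hu]) (by positivity)
  have hexp : IntegrableOn (fun u : ℝ => M * Real.exp (-β * u)) (Set.Ioi 0) :=
    (exp_neg_integrableOn_Ioi 0 hβ).const_mul M
  refine Integrable.mono' hexp ?_ ?_
  · have := measurable_kernel_diff n x y
    exact Measurable.aestronglyMeasurable (by fun_prop)
  · filter_upwards [ae_restrict_mem measurableSet_Ioi] with u hu
    have hu : 0 < u := hu
    rw [Real.norm_of_nonneg (by positivity), neg_mul]
    gcongr
    exact hbound u hu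

/-! ### The bound on `H` -/

/-- Pointwise bound of `H_{β,σ}(x,y,t)` by an integral of the explicit profile `(t/√u)^σ e^{-t/√u}`
against the right-hand integrand. It uses lower integrals, so no integrability of the integrand
defining `H` is required. -/
lemma Hkernel_enorm_le (n : ℕ) (σ β A : ℝ) (hA : 0 < A)
    (hf : ∀ u > 0, ∀ t > 0,
      ‖fracDeriv σ (fun t : ℝ => (t : ℂ) * Complex.exp (-((t : ℂ) ^ 2 / (4 * ((u : ℝ) : ℂ))))) t‖
        ≤ A * (√u * (√u)⁻¹ ^ σ) * Real.exp (-((√u)⁻¹ * t)))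
    (x y : EuclideanSpace ℝ (Fin n)) (t : ℝ) (ht : 0 < t) :
    ‖Hkernel n β σ x y t‖ₑ ≤ ENNReal.ofReal (A / √(4 * Real.pi)) *
      ∫⁻ u in Set.Ioi (0 : ℝ),
        ENNReal.ofReal (t ^ σ * (√u)⁻¹ ^ σ * Real.exp (-((√u)⁻¹ * t))) *
        ENNReal.ofReal (u⁻¹ * |ouKernel n u x y - euclidHeat n u (x - y)| *
          Real.exp (-(β * u))) := by
  unfold Hkernel
  rw [enorm_mul, ← lintegral_const_mul' _ _ ENNReal.ofReal_ne_top]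
  refine (mul_le_mul_right (enorm_integral_le_lintegral_enorm _) _).trans ?_
  rw [← lintegral_const_mul' _ _ enorm_ne_top]
  refine lintegral_mono_ae ?_
  filter_upwards [ae_restrict_mem measurableSet_Ioi] with u hu
  have hu : 0 < u := hu
  have hs : 0 < √u := Real.sqrt_pos.2 hu
  rw [← enorm_mul, ← ofReal_norm, ← ENNReal.ofReal_mul (by positivity),
    ← ENNReal.ofReal_mul (by positivity)]
  refine ENNReal.ofReal_le_ofReal ?_
  rw [norm_mul, norm_mul, norm_mul, Complex.norm_real, Complex.norm_real, Complex.norm_real,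
    Real.norm_of_nonneg (by positivity), Real.norm_of_nonneg (by positivity), norm_mul,
    Real.norm_of_nonneg (Real.exp_pos _).le, Real.norm_eq_abs]
  have hpow : √u * u ^ (-(3 : ℝ) / 2) = u⁻¹ := by
    rw [Real.sqrt_eq_rpow, ← Real.rpow_add hu, ← Real.rpow_neg_one]; norm_num
  set D := |ouKernel n u x y - euclidHeat n u (x - y)|
  calc _ ≤ t ^ σ / √(4 * Real.pi) * (A * (√u * (√u)⁻¹ ^ σ) * Real.exp (-((√u)⁻¹ * t)) *
        u ^ (-(3 : ℝ) / 2) * (Real.exp (-(β * u)) * D)) := by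
        gcongr
        exact hf u hu t ht
    _ = _ := by rw [← hpow]; ring

/-- For `n ≥ 1`, `σ > 0` and `β > 0` there is `C > 0` such that for `x ≠ y`,
`(∫_0^∞ |H_{β,σ}(x,y,t)|² dt/t)^{1/2} ≤ C ∫_0^∞ u^{-1}|W_u^O(x,y)-W_u^{-Δ}(x-y)| e^{-βu} du`. -/
theorem Hkernel_H_norm_bound (n : ℕ) (hn : 1 ≤ n) (σ β : ℝ) (hσ : 0 < σ) (hβ : 0 < β) :
    ∃ C > 0, ∀ x y : EuclideanSpace ℝ (Fin n), x ≠ y →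
      (∫ t in Set.Ioi (0 : ℝ), ‖Hkernel n β σ x y t‖ ^ 2 / t) ^ ((1 : ℝ) / 2) ≤
        C * ∫ u in Set.Ioi (0 : ℝ),
          u⁻¹ * |ouKernel n u x y - euclidHeat n u (x - y)| * Real.exp (-(β * u)) := by
  obtain ⟨A, hA, hf⟩ := fracDeriv_bound σ
  have hG := Real.Gamma_pos_of_pos (show 0 < 2 * σ by positivity)
  set K := (1 / 2 : ℝ) ^ (2 * σ) * Real.Gamma (2 * σ) with hKdef
  have hK : 0 < K := by positivity
  set B := A / √(4 * Real.pi) with hB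
  have hB0 : 0 < B := by positivity
  refine ⟨B * √K, by positivity, fun x y hxy => ?_⟩
  have hint := rhs_integrable n β hβ x y hxy
  set G : ℝ → ℝ := fun u => u⁻¹ * |ouKernel n u x y - euclidHeat n u (x - y)| *
    Real.exp (-(β * u)) with hGdef
  have hG0 : 0 ≤ᵐ[volume.restrict (Set.Ioi 0)] G := by
    filter_upwards [ae_restrict_mem measurableSet_Ioi] with u hu
    have hu : 0 < u := hu
    simp only [hGdef, Pi.zero_apply]
    positivity
  have hI0 : 0 ≤ ∫ u in Set.Ioi (0 : ℝ), G u := integral_nonneg_of_ae hG0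
  set I := ∫ u in Set.Ioi (0 : ℝ), G u with hIdef
  rw [← Real.sqrt_eq_rpow]
  refine Real.sqrt_le_iff.2 ⟨by positivity, ?_⟩
  -- If the left-hand integrand is not integrable, its Bochner integral is `0` by convention.
  by_cases hL : IntegrableOn (fun t => ‖Hkernel n β σ x y t‖ ^ 2 / t) (Set.Ioi 0)
  swap
  · rw [integral_undef hL]; positivity
  have hL0 : 0 ≤ᵐ[volume.restrict (Set.Ioi 0)] fun t => ‖Hkernel n β σ x y t‖ ^ 2 / t := by
    filter_upwards [ae_restrict_mem measurableSet_Ioi] with t ht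
    have ht : 0 < t := ht
    simp only [Pi.zero_apply]
    positivity
  rw [← ENNReal.ofReal_le_ofReal_iff (by positivity), ofReal_integral_eq_lintegral_ofReal hL hL0]
  have hGm : Measurable G := by
    have := measurable_kernel_diff n x y
    fun_prop
  have hmink := lintegral_sq_lintegral_le (μ := volume.restrict (Set.Ioi 0))
    (ν := volume.restrict (Set.Ioi 0))
    (fun t u => ENNReal.ofReal (t ^ σ * (√u)⁻¹ ^ σ * Real.exp (-((√u)⁻¹ * t))))
    (by unfold Function.uncurry; fun_prop)
    (fun u => ENNReal.ofReal (G u)) (fun t => ENNReal.ofReal t⁻¹) (by fun_prop) (by fun_prop)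
    (ENNReal.ofReal K) (by
      filter_upwards [ae_restrict_mem measurableSet_Ioi] with u hu
      exact (profile_sq_lintegral σ hσ _ (inv_pos.2 (Real.sqrt_pos.2 hu))).le)
  rw [← ofReal_integral_eq_lintegral_ofReal hint hG0, ← hIdef] at hmink
  calc ∫⁻ t in Set.Ioi (0 : ℝ), ENNReal.ofReal (‖Hkernel n β σ x y t‖ ^ 2 / t)
      ≤ ∫⁻ t in Set.Ioi (0 : ℝ), ENNReal.ofReal B ^ 2 * ((∫⁻ u in Set.Ioi (0 : ℝ),
          ENNReal.ofReal (t ^ σ * (√u)⁻¹ ^ σ * Real.exp (-((√u)⁻¹ * t))) *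
            ENNReal.ofReal (G u)) ^ 2 * ENNReal.ofReal t⁻¹) := by
        refine lintegral_mono_ae ?_
        filter_upwards [ae_restrict_mem measurableSet_Ioi] with t ht
        have hb := Hkernel_enorm_le n σ β A hA hf x y t ht
        rw [div_eq_mul_inv, ENNReal.ofReal_mul (by positivity),
          ENNReal.ofReal_pow (norm_nonneg _), ofReal_norm, ← mul_assoc, ← mul_pow]
        gcongr
    _ ≤ ENNReal.ofReal B ^ 2 * (ENNReal.ofReal K * ENNReal.ofReal I ^ 2) := by
        rw [lintegral_const_mul' _ _ (by simp)]
        gcongr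
    _ = ENNReal.ofReal ((B * √K * I) ^ 2) := by
        rw [← ENNReal.ofReal_pow hB0.le, ← ENNReal.ofReal_pow hI0, ← ENNReal.ofReal_mul hK.le,
          ← ENNReal.ofReal_mul (by positivity), mul_pow, mul_pow, Real.sq_sqrt hK.le]
        congr 1; ring
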